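/- Let x ∈ S_n' be nilpotent. Define, for 1 ≤ i ≤ m+n, ẽ_i = ê_i + Σ_{k=1}^{n} (x^k)_{m+n, i} ê_{m+n+k} + Σ_{l=1}^{m+n} (x^l)_{m+2n, i} f̂_{n+l}, and for 1 ≤ j ≤ n, f̃_j = f̂_j + Σ_{k=1}^{n} (x^k)_{m+n, m+n+j} ê_{m+n+k} + Σ_{l=1}^{m+n} (x^l)_{m+2n, m+n+j} f̂_{n+l}. Then the subspace L = span(ẽ_1, …, ẽ_{m+n}, f̃_1, …, f̃_n) of V satisfies: z L ⊆ L; P restricts to a linear isomorphism from L onto W; and P ∘ z ∘ (P|_L)^{−1} = x as endomorphisms of W. (Explicit construction of the z-stable lift from the proof of Lemma 2.5 of the paper.) -/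

import Mathlib

/-!
A lift of `w ∈ W` to `V` that intertwines `x` with `z` is determined by its components along `ê_1`
and `f̂_1`. Taking these to be the coordinates of `w` along `u_1` and `u_{m+n+1}`, the bottoms of
the two blocks, gives `w ↦ ∑_{i < N} (x^i w)_1 ê_{i+1} + ∑_{i < N} (x^i w)_{m+n+1} f̂_{i+1}`.
Both `z` and `x` shift the exponent in these sums, and `x^N = 0`, so the lift is equivariant.

Since `x` agrees with `z_n` away from the tops of the blocks, a coordinate at height `i` of a block
is the bottom coordinate of `x^i w`. Hence the lift of `u_c` is `ẽ_c` or `f̃_{c-m-n}`: the basis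
vector comes from the powers of `x` below the length of the block, the tail from the others. So `L`
is the range of an equivariant section of `P`.
-/

open Module BigOperators

noncomputable section

/-- The `k`-th standard basis vector `u_k` of `ℂ^(m+2n)`, indexed `1`-based;
it is zero if `k` is out of the range `1, …, m+2n`. -/
def stdVec (m n : ℕ) (k : ℕ) : Fin (m + 2*n) → ℂ := fun i => if (i : ℕ) + 1 = k then 1 else 0

/-- The matrix of the two-block nilpotent `z_n` of Jordan type `(m+n, n)`:
`z_n u_i = u_{i-1}` for `2 ≤ i ≤ m+n` and for `m+n+2 ≤ i ≤ m+2n`, and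
`z_n u_1 = z_n u_{m+n+1} = 0`. -/
def zMat (m n : ℕ) : Matrix (Fin (m + 2*n)) (Fin (m + 2*n)) ℂ :=
  fun i j => if (j : ℕ) = (i : ℕ) + 1 ∧ (j : ℕ) ≠ m + n then 1 else 0

/-- The two-block nilpotent `z_n` as an endomorphism of `ℂ^(m+2n)`. -/
def zn (m n : ℕ) : Module.End ℂ (Fin (m + 2*n) → ℂ) := Matrix.toLin' (zMat m n)

/-- The enlarged slice `S_n' ⊆ End(ℂ^(m+2n))`: the endomorphisms whose matrix agrees
with that of `z_n` outside rows `m+n` and `m+2n`, i.e. `x u_j - z_n u_j` lies in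
`span{u_{m+n}, u_{m+2n}}` for every `j`. -/
def slice' (m n : ℕ) : Set (Module.End ℂ (Fin (m + 2*n) → ℂ)) :=
  { x | ∀ j : ℕ, x (stdVec m n j) - zn m n (stdVec m n j) ∈
      Submodule.span ℂ {stdVec m n (m + n), stdVec m n (m + 2*n)} }

/-- The matrix entry `x_{p,q}` (`1`-based) of an endomorphism of `ℂ^(m+2n)`
in the standard basis `u_1, …, u_{m+2n}`. -/
def entry (m n : ℕ) (x : Module.End ℂ (Fin (m + 2*n) → ℂ)) (p q : ℕ) : ℂ :=
  ∑ i, stdVec m n p i * x (stdVec m n q) i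

/-- The standard basis of `V = ℂ^(2(m+2n))`, indexed `1`-based: for `1 ≤ k ≤ m+2n`,
`bigVec k` is `ê_k`, and for `1 ≤ j ≤ m+2n`, `bigVec (m+2n+j)` is `f̂_j`. -/
def bigVec (m n : ℕ) (k : ℕ) : Fin (2*(m + 2*n)) → ℂ := fun i => if (i : ℕ) + 1 = k then 1 else 0

/-- The matrix of `z ∈ End(V)`, `z ê_i = ê_{i-1}`, `z f̂_j = f̂_{j-1}` (`ê_0 = f̂_0 = 0`). -/
def bigZMat (m n : ℕ) : Matrix (Fin (2*(m + 2*n))) (Fin (2*(m + 2*n))) ℂ :=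
  fun i j => if (j : ℕ) = (i : ℕ) + 1 ∧ (j : ℕ) ≠ m + 2*n then 1 else 0

/-- The endomorphism `z` of `V = ℂ^(2(m+2n))`. -/
def bigZ (m n : ℕ) : Module.End ℂ (Fin (2*(m + 2*n)) → ℂ) := Matrix.toLin' (bigZMat m n)

/-- The matrix of the projection `P : V → W ≅ ℂ^(m+2n)`:
`P ê_i = u_i` for `i ≤ m+n`, `P ê_i = 0` for `i > m+n`,
`P f̂_j = u_{m+n+j}` for `j ≤ n`, `P f̂_j = 0` for `j > n`. -/
def projMat (m n : ℕ) : Matrix (Fin (m + 2*n)) (Fin (2*(m + 2*n))) ℂ :=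
  fun i j => if ((j : ℕ) = (i : ℕ) ∧ (i : ℕ) < m + n) ∨
      ((j : ℕ) = (i : ℕ) + n ∧ m + n ≤ (i : ℕ)) then 1 else 0

/-- The projection `P : V → W ≅ ℂ^(m+2n)` (composed with the identification `W ≅ ℂ^(m+2n)`
via `ê_i ↦ u_i`, `f̂_j ↦ u_{m+n+j}`). -/
def proj (m n : ℕ) : (Fin (2*(m + 2*n)) → ℂ) →ₗ[ℂ] (Fin (m + 2*n) → ℂ) :=
  Matrix.toLin' (projMat m n)


/-- The lifted basis vectors: for `1 ≤ c ≤ m+n`, `tildeVec c` is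
`ẽ_c = ê_c + ∑_{k=1}^{n} (x^k)_{m+n,c} ê_{m+n+k} + ∑_{l=1}^{m+n} (x^l)_{m+2n,c} f̂_{n+l}`,
and for `c = m+n+j` with `1 ≤ j ≤ n`, `tildeVec c` is
`f̃_j = f̂_j + ∑_{k=1}^{n} (x^k)_{m+n,c} ê_{m+n+k} + ∑_{l=1}^{m+n} (x^l)_{m+2n,c} f̂_{n+l}`
(recall `f̂_j = bigVec (m+2n+j)`). -/
def tildeVec (m n : ℕ) (x : Module.End ℂ (Fin (m + 2*n) → ℂ)) (c : ℕ) :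
    Fin (2*(m + 2*n)) → ℂ :=
  (if c ≤ m + n then bigVec m n c else bigVec m n (c + n))
    + (∑ k ∈ Finset.Icc 1 n, entry m n (x ^ k) (m + n) c • bigVec m n (m + n + k))
    + (∑ l ∈ Finset.Icc 1 (m + n),
        entry m n (x ^ l) (m + 2*n) c • bigVec m n (m + 2*n + n + l))

section EquivariantLift

variable {R M V : Type*} [Semiring R] [AddCommMonoid M] [AddCommMonoid V] [Module R M]
  [Module R V]

lemma mem_range_of_comp_eq {z : End R V} {x : End R M} {T : M →ₗ[R] V} (hT : z ∘ₗ T = T ∘ₗ x)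
    {v : V} (hv : v ∈ LinearMap.range T) : z v ∈ LinearMap.range T := by
  obtain ⟨w, rfl⟩ := hv
  exact ⟨x w, (LinearMap.congr_fun hT w).symm⟩

lemma bijective_domRestrict_range_of_comp_eq_id {P : V →ₗ[R] M} {T : M →ₗ[R] V}
    (hPT : P ∘ₗ T = LinearMap.id) :
    Function.Bijective (P.domRestrict (LinearMap.range T)) :=
  (LinearEquiv.ofLeftInverse (LinearMap.congr_fun hPT)).symm.bijective

lemma section_comp_apply_of_mem_range {z : End R V} {x : End R M} {T : M →ₗ[R] V} {P : V →ₗ[R] M}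
    (hT : z ∘ₗ T = T ∘ₗ x) (hPT : P ∘ₗ T = LinearMap.id) {v : V} (hv : v ∈ LinearMap.range T) :
    P (z v) = x (P v) := by
  obtain ⟨w, rfl⟩ := hv
  have hP (w : M) : P (T w) = w := LinearMap.congr_fun hPT w
  rw [show z (T w) = T (x w) from LinearMap.congr_fun hT w, hP, hP]

/-- `b 1, …, b N` is a Jordan chain for the eigenvalue `0` of `z`, with `b 1` in the kernel. The
indexing is `1`-based; `b` is unconstrained elsewhere. -/
structure IsJordanChain (z : End R V) (b : ℕ → V) (N : ℕ) : Prop where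
  map_one : z (b 1) = 0
  map_succ : ∀ i, 1 ≤ i → i < N → z (b (i + 1)) = b i

/-- The map `w ↦ ∑_{i < N} φ (x^i w) b_{i+1}`: the lift of `M` along the chain `b 1, …, b N` whose
component along `b 1` is the functional `φ`. -/
def chainLift (φ : M →ₗ[R] R) (x : End R M) (b : ℕ → V) (N : ℕ) : M →ₗ[R] V :=
  ∑ i ∈ Finset.range N, (φ ∘ₗ (x ^ i)).smulRight (b (i + 1))

lemma chainLift_apply (φ : M →ₗ[R] R) (x : End R M) (b : ℕ → V) (N : ℕ) (w : M) :
    chainLift φ x b N w = ∑ i ∈ Finset.range N, φ ((x ^ i) w) • b (i + 1) := by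
  simp [chainLift]

lemma IsJordanChain.comp_chainLift {z : End R V} {b : ℕ → V} {N : ℕ} (hb : IsJordanChain z b N)
    (φ : M →ₗ[R] R) {x : End R M} (hx : x ^ N = 0) :
    z ∘ₗ chainLift φ x b N = chainLift φ x b N ∘ₗ x := by
  ext w
  simp only [LinearMap.comp_apply, chainLift_apply, map_sum, map_smul, ← Module.End.mul_apply,
    ← pow_succ]
  cases N with
  | zero => simp
  | succ N =>
    rw [Finset.sum_range_succ', Finset.sum_range_succ, hx, hb.map_one, LinearMap.zero_apply,
      map_zero, smul_zero, zero_smul]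
    congr 1
    refine Finset.sum_congr rfl fun i hi => ?_
    rw [hb.map_succ (i + 1) (by omega) (by simpa using hi)]

lemma chainLift_add_apply (φ : M →ₗ[R] R) (x : End R M) (b : ℕ → V) (a t : ℕ) (w : M) :
    chainLift φ x b (a + 1 + t) w = chainLift φ x b (a + 1) w +
      ∑ k ∈ Finset.Icc 1 t, φ ((x ^ a) ((x ^ k) w)) • b (a + 1 + k) := by
  rw [chainLift_apply, Finset.sum_range_add, ← chainLift_apply,
    ← Finset.Ico_add_one_right_eq_Icc, Finset.sum_Ico_eq_sum_range, Nat.add_sub_cancel]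
  congr 1
  refine Finset.sum_congr rfl fun k _ => ?_
  rw [← Module.End.mul_apply, ← pow_add, ← add_assoc a, ← add_assoc (a + 1),
    add_right_comm (a + 1)]

end EquivariantLift

lemma pow_finrank_eq_zero_of_isNilpotent {R M : Type*} [CommRing R] [IsDomain R]
    [AddCommGroup M] [Module R M] [Module.Free R M] [Module.Finite R M] {x : End R M}
    (hx : IsNilpotent x) : x ^ finrank R M = 0 := by
  simpa [hx.charpoly_eq_X_pow_finrank] using x.aeval_self_charpoly

variable {m n : ℕ} {x : End ℂ (Fin (m + 2 * n) → ℂ)}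

lemma stdVec_succ (i : Fin (m + 2 * n)) : stdVec m n (i + 1) = Pi.single i 1 := by
  ext j
  simp [stdVec, Pi.single_apply, Fin.ext_iff]

lemma bigVec_succ (i : Fin (2 * (m + 2 * n))) : bigVec m n (i + 1) = Pi.single i 1 := by
  ext j
  simp [bigVec, Pi.single_apply, Fin.ext_iff]

lemma bigVec_zero : bigVec m n 0 = 0 := by
  ext i
  exact if_neg (by omega)

lemma stdVec_eq_zero_of_lt {k : ℕ} (hk : m + 2 * n < k) : stdVec m n k = 0 := by
  ext i
  exact if_neg (by omega)

/-- The `p`-th coordinate functional on `ℂ^(m+2n)`. As for `stdVec`, the index is `1`-based and the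
functional is zero out of range. -/
def coord (m n p : ℕ) : (Fin (m + 2 * n) → ℂ) →ₗ[ℂ] ℂ :=
  dotProductBilin ℂ ℂ (stdVec m n p)

lemma entry_eq_coord (x : End ℂ (Fin (m + 2 * n) → ℂ)) (p q : ℕ) :
    entry m n x p q = coord m n p (x (stdVec m n q)) :=
  rfl

lemma coord_succ_apply (i : Fin (m + 2 * n)) (w : Fin (m + 2 * n) → ℂ) :
    coord m n (i + 1) w = w i := by
  change stdVec m n (i + 1) ⬝ᵥ w = w i
  rw [stdVec_succ, single_one_dotProduct]

lemma coord_stdVec {p : ℕ} (hp : 1 ≤ p) (hpN : p ≤ m + 2 * n) (c : ℕ) :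
    coord m n p (stdVec m n c) = if p = c then 1 else 0 := by
  obtain ⟨i, rfl⟩ := Nat.exists_eq_add_of_le' hp
  exact coord_succ_apply ⟨i, hpN⟩ _

lemma coord_zn {p : ℕ} (hp : 1 ≤ p) (hpN : p < m + 2 * n) (hpmn : p ≠ m + n)
    (w : Fin (m + 2 * n) → ℂ) : coord m n p (zn m n w) = coord m n (p + 1) w := by
  obtain ⟨i, rfl⟩ := Nat.exists_eq_add_of_le' hp
  have hrow : zMat m n ⟨i, by omega⟩ = Pi.single ⟨i + 1, hpN⟩ 1 := by
    ext j
    simp only [zMat, Pi.single_apply, Fin.ext_iff]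
    exact if_congr (by omega) rfl rfl
  rw [coord_succ_apply ⟨i, by omega⟩, coord_succ_apply ⟨i + 1, hpN⟩, zn, Matrix.toLin'_apply,
    Matrix.mulVec, hrow, single_one_dotProduct]

lemma coord_apply_of_mem_slice' (hx : x ∈ slice' m n) {p : ℕ} (hp : 1 ≤ p) (hpN : p < m + 2 * n)
    (hpmn : p ≠ m + n) (w : Fin (m + 2 * n) → ℂ) :
    coord m n p (x w) = coord m n (p + 1) w := by
  have hker : Submodule.span ℂ {stdVec m n (m + n), stdVec m n (m + 2 * n)} ≤
      LinearMap.ker (coord m n p) := by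
    rw [Submodule.span_le]
    rintro _ (rfl | rfl)
    · simp [coord_stdVec hp hpN.le, hpmn]
    · simp [coord_stdVec hp hpN.le, hpN.ne]
  have hzn : coord m n p ∘ₗ x = coord m n p ∘ₗ zn m n := by
    refine LinearMap.pi_ext' fun j => LinearMap.ext_ring ?_
    simpa [sub_eq_zero, stdVec_succ] using hker (hx (j + 1))
  rw [← coord_zn hp hpN hpmn]
  exact LinearMap.congr_fun hzn w

lemma coord_pow_apply_of_mem_slice' (hx : x ∈ slice' m n) {p : ℕ} (hp : 1 ≤ p) (k : ℕ)
    (hN : p + k ≤ m + 2 * n) (hmn : p + k ≤ m + n ∨ m + n < p) (w : Fin (m + 2 * n) → ℂ) :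
    coord m n p ((x ^ k) w) = coord m n (p + k) w := by
  induction k generalizing w with
  | zero => rfl
  | succ k ih =>
    rw [pow_succ, Module.End.mul_apply, ih (by omega) (by omega),
      coord_apply_of_mem_slice' hx (by omega) (by omega) (by omega), add_assoc]

lemma chainLift_coord_stdVec_of_le {V : Type*} [AddCommMonoid V] [Module ℂ V]
    (hx : x ∈ slice' m n) (b : ℕ → V) {s a : ℕ} (hN : s + a ≤ m + 2 * n)
    (hmn : s + a ≤ m + n ∨ m + n ≤ s) (c : ℕ) :
    chainLift (coord m n (s + 1)) x b a (stdVec m n c) =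
      if s < c ∧ c ≤ s + a then b (c - s) else 0 := by
  have hterm : ∀ i ∈ Finset.range a,
      coord m n (s + 1) ((x ^ i) (stdVec m n c)) • b (i + 1) =
        if s + 1 + i = c then b (i + 1) else 0 := fun i hi => by
    have := Finset.mem_range.1 hi
    rw [coord_pow_apply_of_mem_slice' hx (by omega) i (by omega) (by omega),
      coord_stdVec (by omega) (by omega), ite_smul, one_smul, zero_smul]
  rw [chainLift_apply, Finset.sum_congr rfl hterm]
  split_ifs with hc
  · obtain ⟨i, rfl⟩ := Nat.exists_eq_add_of_le (show s + 1 ≤ c from hc.1)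
    have hi : i ∈ Finset.range a := Finset.mem_range.2 (by omega)
    simp only [Nat.add_left_cancel_iff, Finset.sum_ite_eq', hi, if_true]
    congr 1
    omega
  · refine Finset.sum_eq_zero fun i hi => if_neg ?_
    have := Finset.mem_range.1 hi
    omega

lemma chainLift_coord_stdVec {V : Type*} [AddCommMonoid V] [Module ℂ V] (hx : x ∈ slice' m n)
    (b : ℕ → V) {s a t p N : ℕ} (ha : 1 ≤ a) (hp : s + a = p) (hN : a + t = N)
    (hpN : p ≤ m + 2 * n) (hmn : p ≤ m + n ∨ m + n ≤ s) (c : ℕ) :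
    chainLift (coord m n (s + 1)) x b N (stdVec m n c) =
      (if s < c ∧ c ≤ p then b (c - s) else 0) +
        ∑ k ∈ Finset.Icc 1 t, entry m n (x ^ k) p c • b (a + k) := by
  subst hp hN
  rw [← chainLift_coord_stdVec_of_le hx b hpN hmn]
  obtain ⟨a, rfl⟩ := Nat.exists_eq_add_of_le' ha
  rw [chainLift_add_apply]
  congr 1
  refine Finset.sum_congr rfl fun k _ => ?_
  rw [coord_pow_apply_of_mem_slice' hx (by omega) a (by omega) (by omega), entry_eq_coord,
    add_right_comm, add_assoc]

lemma bigZ_bigVec_succ {k : ℕ} (hk : k < 2 * (m + 2 * n)) (hkN : k ≠ m + 2 * n) :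
    bigZ m n (bigVec m n (k + 1)) = bigVec m n k := by
  rw [bigVec_succ ⟨k, hk⟩, bigZ, Matrix.toLin'_apply, Matrix.mulVec_single_one]
  ext i
  exact if_congr (by simp only; omega) rfl rfl

lemma bigZ_bigVec_dim_succ (hN : 0 < m + 2 * n) :
    bigZ m n (bigVec m n (m + 2 * n + 1)) = 0 := by
  rw [bigVec_succ ⟨m + 2 * n, by omega⟩, bigZ, Matrix.toLin'_apply, Matrix.mulVec_single_one]
  ext i
  exact if_neg (by simp)

lemma isJordanChain_eHat (hN : 0 < m + 2 * n) :
    IsJordanChain (bigZ m n) (bigVec m n) (m + 2 * n) where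
  map_one := (bigZ_bigVec_succ (by omega) (by omega)).trans bigVec_zero
  map_succ i _ _ := bigZ_bigVec_succ (by omega) (by omega)

lemma isJordanChain_fHat (hN : 0 < m + 2 * n) :
    IsJordanChain (bigZ m n) (fun j => bigVec m n (m + 2 * n + j)) (m + 2 * n) where
  map_one := bigZ_bigVec_dim_succ hN
  map_succ j _ _ := bigZ_bigVec_succ (k := m + 2 * n + j) (by omega) (by omega)

/-- The equivariant lift `W → V`, with components along `ê_1` and `f̂_1` the coordinates along `u_1`
and `u_{m+n+1}`. -/
def equivariantLift (m n : ℕ) (x : End ℂ (Fin (m + 2 * n) → ℂ)) :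
    (Fin (m + 2 * n) → ℂ) →ₗ[ℂ] (Fin (2 * (m + 2 * n)) → ℂ) :=
  chainLift (coord m n 1) x (bigVec m n) (m + 2 * n) +
    chainLift (coord m n (m + n + 1)) x (fun j => bigVec m n (m + 2 * n + j)) (m + 2 * n)

lemma bigZ_comp_equivariantLift (hN : 0 < m + 2 * n) (hnil : IsNilpotent x) :
    bigZ m n ∘ₗ equivariantLift m n x = equivariantLift m n x ∘ₗ x := by
  have hpow : x ^ (m + 2 * n) = 0 := by
    simpa using pow_finrank_eq_zero_of_isNilpotent hnil
  rw [equivariantLift, LinearMap.comp_add, LinearMap.add_comp,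
    (isJordanChain_eHat hN).comp_chainLift _ hpow, (isJordanChain_fHat hN).comp_chainLift _ hpow]

lemma equivariantLift_stdVec (hn : 1 ≤ n) (hx : x ∈ slice' m n) {c : ℕ} (hc : 1 ≤ c)
    (hcN : c ≤ m + 2 * n) : equivariantLift m n x (stdVec m n c) = tildeVec m n x c := by
  have hbase : (if 0 < c ∧ c ≤ m + n then bigVec m n (c - 0) else 0) +
      (if m + n < c ∧ c ≤ m + 2 * n then bigVec m n (m + 2 * n + (c - (m + n))) else 0) =
        if c ≤ m + n then bigVec m n c else bigVec m n (c + n) := by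
    by_cases h : c ≤ m + n
    · rw [if_pos ⟨hc, h⟩, if_neg (by omega), if_pos h, add_zero, Nat.sub_zero]
    · rw [if_neg (by omega), if_pos (by omega), if_neg h, zero_add]
      congr 1
      omega
  have hE := chainLift_coord_stdVec hx (bigVec m n) (a := m + n) (t := n) (N := m + 2 * n)
    (by omega) (zero_add _) (by omega) (by omega) (by omega) c
  have hF := chainLift_coord_stdVec hx (fun j => bigVec m n (m + 2 * n + j)) (s := m + n) (a := n)
    (t := m + n) (p := m + 2 * n) (N := m + 2 * n) hn (by omega) (by omega) le_rfl (by omega) c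
  simp only [zero_add, ← add_assoc (m + 2 * n) n] at hE hF
  rw [equivariantLift, LinearMap.add_apply, hE, hF, tildeVec, ← hbase]
  abel

lemma proj_apply (v : Fin (2 * (m + 2 * n)) → ℂ) (i : Fin (m + 2 * n)) :
    proj m n v i = if (i : ℕ) < m + n then v ⟨i, by omega⟩ else v ⟨i + n, by omega⟩ := by
  rw [proj, Matrix.toLin'_apply, Matrix.mulVec, ← apply_ite v, ← single_one_dotProduct _ v]
  congr 1
  ext j
  simp only [projMat, Pi.single_apply, Fin.ext_iff]
  refine if_congr ?_ rfl rfl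
  split_ifs <;> simp only <;> omega

lemma proj_bigVec_of_le {k : ℕ} (hk : k ≤ m + n) : proj m n (bigVec m n k) = stdVec m n k := by
  ext i
  simp only [proj_apply, bigVec, stdVec]
  split_ifs <;> first | rfl | omega

lemma proj_bigVec_of_lt_of_le {k : ℕ} (hk : m + n < k) (hkN : k ≤ m + 2 * n) :
    proj m n (bigVec m n k) = 0 := by
  ext i
  simp only [proj_apply, bigVec, Pi.zero_apply]
  split_ifs <;> first | rfl | omega

lemma proj_bigVec_add_of_lt {k : ℕ} (hk : m + n < k) :
    proj m n (bigVec m n (k + n)) = stdVec m n k := by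
  ext i
  simp only [proj_apply, bigVec, stdVec]
  split_ifs <;> first | rfl | omega

lemma proj_tildeVec (x : End ℂ (Fin (m + 2 * n) → ℂ)) (c : ℕ) :
    proj m n (tildeVec m n x c) = stdVec m n c := by
  have hbase : proj m n (if c ≤ m + n then bigVec m n c else bigVec m n (c + n)) =
      stdVec m n c := by
    split_ifs with hc
    · exact proj_bigVec_of_le hc
    · exact proj_bigVec_add_of_lt (not_le.1 hc)
  have htailE : ∀ k ∈ Finset.Icc 1 n, proj m n (bigVec m n (m + n + k)) = 0 := fun k hk => by
    have := Finset.mem_Icc.1 hk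
    exact proj_bigVec_of_lt_of_le (by omega) (by omega)
  have htailF : ∀ l ∈ Finset.Icc 1 (m + n), proj m n (bigVec m n (m + 2 * n + n + l)) = 0 :=
    fun l hl => by
      have := Finset.mem_Icc.1 hl
      rw [add_right_comm, proj_bigVec_add_of_lt (by omega), stdVec_eq_zero_of_lt (by omega)]
  simp only [tildeVec, map_add, map_sum, map_smul]
  rw [hbase, Finset.sum_eq_zero fun k hk => by rw [htailE k hk, smul_zero],
    Finset.sum_eq_zero fun l hl => by rw [htailF l hl, smul_zero], add_zero, add_zero]

lemma proj_comp_equivariantLift (hn : 1 ≤ n) (hx : x ∈ slice' m n) :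
    proj m n ∘ₗ equivariantLift m n x = LinearMap.id := by
  refine LinearMap.pi_ext' fun j => LinearMap.ext_ring ?_
  simp only [LinearMap.comp_apply, LinearMap.coe_single, LinearMap.id_apply, ← stdVec_succ]
  rw [equivariantLift_stdVec hn hx (by omega) (by omega), proj_tildeVec]

lemma range_equivariantLift (hn : 1 ≤ n) (hx : x ∈ slice' m n) :
    LinearMap.range (equivariantLift m n x) =
      Submodule.span ℂ (Set.range fun c : Fin (m + 2 * n) => tildeVec m n x (c + 1)) := by
  have himage : (fun c : Fin (m + 2 * n) => tildeVec m n x (c + 1)) =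
      equivariantLift m n x ∘ Pi.basisFun ℂ (Fin (m + 2 * n)) := by
    funext c
    rw [Function.comp_apply, Pi.basisFun_apply, ← stdVec_succ,
      equivariantLift_stdVec hn hx (by omega) (by omega)]
  rw [himage, Set.range_comp, Submodule.span_image, Basis.span_eq, Submodule.map_top]

/-- For nilpotent `x ∈ S_n'`, the span `L` of the lifted basis vectors
`ẽ_1, …, ẽ_{m+n}, f̃_1, …, f̃_n` is `z`-stable, `P` restricts to a linear isomorphism
from `L` onto `W ≅ ℂ^(m+2n)`, and `P ∘ z ∘ (P|_L)⁻¹ = x`. -/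
theorem span_tildeVec_is_z_stable_lift (m n : ℕ) (hn : 1 ≤ n)
    (x : Module.End ℂ (Fin (m + 2*n) → ℂ)) (hx : x ∈ slice' m n)
    (hnil : IsNilpotent x) :
    ∀ L : Submodule ℂ (Fin (2*(m + 2*n)) → ℂ),
      L = Submodule.span ℂ (Set.range fun c : Fin (m + 2*n) =>
            tildeVec m n x ((c : ℕ) + 1)) →
      (∀ v ∈ L, bigZ m n v ∈ L) ∧
      Function.Bijective ((proj m n).domRestrict L) ∧
      (∀ v ∈ L, proj m n (bigZ m n v) = x (proj m n v)) := by
  rintro L rfl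
  have hequiv := bigZ_comp_equivariantLift (by omega) hnil
  have hsection := proj_comp_equivariantLift hn hx
  rw [← range_equivariantLift hn hx]
  exact ⟨fun _ hv => mem_range_of_comp_eq hequiv hv,
    bijective_domRestrict_range_of_comp_eq_id hsection,
    fun _ hv => section_comp_apply_of_mem_range hequiv hsection hv⟩
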